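/- Fix λ' > 0 and let u(y) = (λ'/(λ'² + |y|²))^{(N−4)/2} (the bubble centered at ξ' = 0). Then ∫_{ℝ^N} Σ_{i,j,m,s=1}^N (∂_m∂_m H̄_{ij})(y) (∂_s∂_s H̄_{ij})(y) u(y)² dy = |S^{N−1}| · (Σ_{i,j,k,ℓ=1}^N (W_{ikjℓ}+W_{iℓjk})²) · λ'^{N−4} · [1/(2N(N+2))] · ∫₀^∞ [ 2(N+4) f'(r²) + 4 r² f''(r²) ]² r^{N+3}/(λ'²+r²)^{N−4} dr. -/

import Mathlib

open scoped BigOperators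
open MeasureTheory

noncomputable section

/-- The partial derivative `∂f/∂y_i` of a function on Euclidean space. -/
def pd (N : ℕ) (i : Fin N) (f : EuclideanSpace ℝ (Fin N) → ℝ) :
    EuclideanSpace ℝ (Fin N) → ℝ :=
  fun y => fderiv ℝ f y (EuclideanSpace.single i 1)

/-- `H_{ij}(y) = Σ_{p,q} W_{ipjq} y_p y_q`. -/
def Hmat (N : ℕ) (W : Fin N → Fin N → Fin N → Fin N → ℝ) (i j : Fin N)
    (y : EuclideanSpace ℝ (Fin N)) : ℝ :=
  ∑ p : Fin N, ∑ q : Fin N, W i p j q * y p * y q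

/-- `H̄_{ij}(y) = f(|y|²) H_{ij}(y)`. -/
def Hbar (N : ℕ) (W : Fin N → Fin N → Fin N → Fin N → ℝ) (f : ℝ → ℝ) (i j : Fin N)
    (y : EuclideanSpace ℝ (Fin N)) : ℝ :=
  f (‖y‖ ^ 2) * Hmat N W i j y

/-- The surface measure on the unit sphere `S^{N-1} ⊂ ℝ^N`. -/
def sphereMeasure (N : ℕ) :
    Measure (Metric.sphere (0 : EuclideanSpace ℝ (Fin N)) 1) :=
  (volume : Measure (EuclideanSpace ℝ (Fin N))).toSphere

/-- `|S^{N-1}|`, the total surface measure of the unit sphere in `ℝ^N`. -/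
def sphereArea (N : ℕ) : ℝ := (sphereMeasure N Set.univ).toReal

/-- Polar coordinates for a product of a degree 4 homogeneous function and a radial one. -/
theorem polar4 (N : ℕ) (hN : 0 < N) (h : EuclideanSpace ℝ (Fin N) → ℝ)
    (hh : ∀ (r : ℝ) y, h (r • y) = r ^ 4 * h y) (g : ℝ → ℝ) :
    ∫ y, h y * g ‖y‖ = (∫ θ, h θ.1 ∂(sphereMeasure N)) * ∫ r in Set.Ioi (0 : ℝ), r ^ (N + 3) * g r := by
  have : Nonempty (Fin N) := ⟨⟨0, hN⟩⟩
  have : Nontrivial (EuclideanSpace ℝ (Fin N)) := inferInstance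
  have key : ∀ x : ({0}ᶜ : Set (EuclideanSpace ℝ (Fin N))), h x.1 * g ‖x.1‖ =
      (fun z : Metric.sphere (0 : EuclideanSpace ℝ (Fin N)) 1 × Set.Ioi (0 : ℝ) =>
        h z.1.1 * (z.2.1 ^ 4 * g z.2.1)) (homeomorphUnitSphereProd _ x) := by
    intro x
    have hx : ‖x.1‖ ≠ 0 := norm_ne_zero_iff.2 x.2
    simp only [homeomorphUnitSphereProd_apply_fst_coe, homeomorphUnitSphereProd_apply_snd_coe]
    rw [hh]
    field_simp
  calc ∫ y, h y * g ‖y‖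
      = ∫ x : ({0}ᶜ : Set (EuclideanSpace ℝ (Fin N))), h x.1 * g ‖x.1‖
          ∂(volume.comap Subtype.val) := by
        rw [integral_subtype_comap (measurableSet_singleton _).compl fun x ↦ h x * g ‖x‖,
          restrict_compl_singleton]
    _ = ∫ z : Metric.sphere (0 : EuclideanSpace ℝ (Fin N)) 1 × Set.Ioi (0 : ℝ),
          h z.1.1 * (z.2.1 ^ 4 * g z.2.1)
          ∂((sphereMeasure N).prod (Measure.volumeIoiPow (N - 1))) := by
        have := (volume : Measure (EuclideanSpace ℝ (Fin N))).measurePreserving_homeomorphUnitSphereProd.integral_comp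
          (Homeomorph.measurableEmbedding _) (fun z : Metric.sphere (0 : EuclideanSpace ℝ (Fin N)) 1 × Set.Ioi (0 : ℝ) =>
        h z.1.1 * (z.2.1 ^ 4 * g z.2.1))
        rw [finrank_euclideanSpace_fin] at this
        rw [sphereMeasure, ← this]
        exact integral_congr_ae (Filter.Eventually.of_forall key)
    _ = (∫ θ, h θ.1 ∂(sphereMeasure N)) *
          ∫ r : Set.Ioi (0 : ℝ), r.1 ^ 4 * g r.1 ∂(Measure.volumeIoiPow (N - 1)) := by
        have : IsFiniteMeasure (sphereMeasure N) := by unfold sphereMeasure; infer_instance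
        exact integral_prod_mul (fun θ : Metric.sphere (0 : EuclideanSpace ℝ (Fin N)) 1 => h θ.1)
          (fun r : Set.Ioi (0 : ℝ) => r.1 ^ 4 * g r.1)
    _ = _ := by
        congr 1
        rw [Measure.volumeIoiPow, integral_withDensity_eq_integral_toReal_smul (by fun_prop)
          (by simp)]
        rw [← integral_subtype_comap measurableSet_Ioi fun r : ℝ => r ^ (N + 3) * g r]
        refine integral_congr_ae (Filter.Eventually.of_forall fun r => ?_)
        have hr : 0 < r.1 := r.2
        simp only [smul_eq_mul]
        rw [ENNReal.toReal_ofReal (by positivity), ← mul_assoc, ← pow_add]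
        congr 2
        omega

theorem coord_le (N : ℕ) (y : EuclideanSpace ℝ (Fin N)) (p : Fin N) : |y p| ≤ ‖y‖ := by
  simpa using PiLp.norm_apply_le y p

theorem gauss_int (N : ℕ) (hN : 0 < N) (k : ℕ) (h : EuclideanSpace ℝ (Fin N) → ℝ)
    (hc : Continuous h) (C : ℝ) (hb : ∀ y, |h y| ≤ C * ‖y‖ ^ k) :
    Integrable (fun y => h y * Real.exp (-‖y‖ ^ 2)) := by
  have : Nonempty (Fin N) := ⟨⟨0, hN⟩⟩
  have : Nontrivial (EuclideanSpace ℝ (Fin N)) := inferInstance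
  have h1 : Integrable (fun y : EuclideanSpace ℝ (Fin N) => ‖y‖ ^ k * Real.exp (-‖y‖ ^ 2)) := by
    rw [integrable_fun_norm_addHaar (volume : Measure (EuclideanSpace ℝ (Fin N)))
      (f := fun r : ℝ => r ^ k * Real.exp (-r ^ 2))]
    have := integrableOn_rpow_mul_exp_neg_mul_sq (b := 1) one_pos (s := ((N - 1 + k : ℕ) : ℝ))
      (by have : (0:ℝ) ≤ ((N - 1 + k : ℕ) : ℝ) := Nat.cast_nonneg _
          linarith)
    refine this.congr_fun (fun r _ => ?_) measurableSet_Ioi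
    simp only [finrank_euclideanSpace_fin, smul_eq_mul, Real.rpow_natCast, pow_add]
    ring_nf
  refine (h1.const_mul C).mono' (by fun_prop) (Filter.Eventually.of_forall fun y => ?_)
  rw [norm_mul, Real.norm_eq_abs, Real.norm_eq_abs, Real.abs_exp, ← mul_assoc]
  exact mul_le_mul_of_nonneg_right (hb y) (Real.exp_pos _).le

theorem pd_mul' (N : ℕ) (m : Fin N) (F G : EuclideanSpace ℝ (Fin N) → ℝ)
    (hF : Differentiable ℝ F) (hG : Differentiable ℝ G) (y : EuclideanSpace ℝ (Fin N)) :
    pd N m (fun y => F y * G y) y = F y * pd N m G y + G y * pd N m F y := by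
  unfold pd
  rw [fderiv_fun_mul (hF y) (hG y)]
  simp

theorem pd_add' (N : ℕ) (m : Fin N) (F G : EuclideanSpace ℝ (Fin N) → ℝ)
    (hF : Differentiable ℝ F) (hG : Differentiable ℝ G) (y : EuclideanSpace ℝ (Fin N)) :
    pd N m (fun y => F y + G y) y = pd N m F y + pd N m G y := by
  unfold pd
  rw [fderiv_fun_add (hF y) (hG y)]
  simp

theorem pd_sum' (N : ℕ) (m : Fin N) (F : Fin N → EuclideanSpace ℝ (Fin N) → ℝ)
    (hF : ∀ p, Differentiable ℝ (F p)) (y : EuclideanSpace ℝ (Fin N)) :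
    pd N m (fun y => ∑ p, F p y) y = ∑ p, pd N m (F p) y := by
  unfold pd
  rw [fderiv_fun_sum (fun p _ => hF p y)]
  simp

theorem pd_const' (N : ℕ) (m : Fin N) (c : ℝ) (y : EuclideanSpace ℝ (Fin N)) :
    pd N m (fun _ => c) y = 0 := by
  simp [pd]

theorem coord_diff (N : ℕ) (p : Fin N) :
    Differentiable ℝ (fun y : EuclideanSpace ℝ (Fin N) => y p) := by fun_prop

theorem pd_coord (N : ℕ) (m p : Fin N) (y : EuclideanSpace ℝ (Fin N)) :
    pd N m (fun y => y p) y = if p = m then 1 else 0 := by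
  have : HasFDerivAt (fun y : EuclideanSpace ℝ (Fin N) => y p)
    (EuclideanSpace.proj p : EuclideanSpace ℝ (Fin N) →L[ℝ] ℝ) y :=
      (EuclideanSpace.proj p : EuclideanSpace ℝ (Fin N) →L[ℝ] ℝ).hasFDerivAt
  unfold pd
  rw [this.fderiv]
  simp

theorem radial_diff (N : ℕ) (F : ℝ → ℝ) (hF : Differentiable ℝ F) :
    Differentiable ℝ (fun y : EuclideanSpace ℝ (Fin N) => F (‖y‖ ^ 2)) :=
  hF.comp (contDiff_norm_sq ℝ (n := 1)).differentiable_one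

theorem pd_radial (N : ℕ) (m : Fin N) (F : ℝ → ℝ) (hF : Differentiable ℝ F)
    (y : EuclideanSpace ℝ (Fin N)) :
    pd N m (fun y => F (‖y‖ ^ 2)) y = 2 * y m * deriv F (‖y‖ ^ 2) := by
  have h1 := (hasStrictFDerivAt_norm_sq y).hasFDerivAt
  have h2 := (hF (‖y‖ ^ 2)).hasDerivAt.comp_hasFDerivAt y h1
  unfold pd
  have : (fun y : EuclideanSpace ℝ (Fin N) => F (‖y‖ ^ 2)) = F ∘ fun x => ‖x‖ ^ 2 := rfl
  rw [this, h2.fderiv]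
  simp [EuclideanSpace.inner_single_right]
  ring

theorem pd_exp (N : ℕ) (m : Fin N) (y : EuclideanSpace ℝ (Fin N)) :
    pd N m (fun y => Real.exp (-‖y‖ ^ 2)) y = -(2 * y m * Real.exp (-‖y‖ ^ 2)) := by
  rw [pd_radial N m (fun x => Real.exp (-x)) (by fun_prop)]
  have : deriv (fun x : ℝ => Real.exp (-x)) (‖y‖ ^ 2) = - Real.exp (-‖y‖ ^ 2) := by
    have h := (hasDerivAt_neg (‖y‖ ^ 2)).exp
    rw [h.deriv]; ring
  rw [this]; ring

theorem stein (N : ℕ) (hN : 0 < N) (k l : ℕ) (m : Fin N) (G : EuclideanSpace ℝ (Fin N) → ℝ)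
    (hG : Differentiable ℝ G) (hc : Continuous (pd N m G)) (C D : ℝ)
    (hb : ∀ y, |G y| ≤ C * ‖y‖ ^ k) (hb' : ∀ y, |pd N m G y| ≤ D * ‖y‖ ^ l) :
    ∫ y, y m * G y * Real.exp (-‖y‖ ^ 2) = 1 / 2 * ∫ y, pd N m G y * Real.exp (-‖y‖ ^ 2) := by
  have hE : Differentiable ℝ (fun y : EuclideanSpace ℝ (Fin N) => Real.exp (-‖y‖ ^ 2)) :=
    radial_diff N (fun x => Real.exp (-x)) (by fun_prop)
  have hcG := hG.continuous
  have e : ∀ y : EuclideanSpace ℝ (Fin N), G y * fderiv ℝ (fun y => Real.exp (-‖y‖ ^ 2)) y (EuclideanSpace.single m 1)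
      = (-2) * (y m * G y * Real.exp (-‖y‖ ^ 2)) := by
    intro y
    have := pd_exp N m y
    unfold pd at this
    rw [this]; ring
  have hyG : Integrable (fun y => y m * G y * Real.exp (-‖y‖ ^ 2)) := by
    refine gauss_int N hN (k + 1) (fun y => y m * G y) (by fun_prop) C fun y => ?_
    rw [abs_mul, pow_succ]
    have h1 := mul_le_mul (coord_le N y m) (hb y) (abs_nonneg _) (norm_nonneg _)
    linarith
  have := integral_mul_fderiv_eq_neg_fderiv_mul_of_integrable (μ := volume)
    (f := G) (g := fun y => Real.exp (-‖y‖ ^ 2)) (v := EuclideanSpace.single m 1)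
    (gauss_int N hN l (pd N m G) hc D hb')
    (by simp_rw [e]; exact hyG.const_mul _)
    (gauss_int N hN k G hG.continuous C hb) (fun x _ => hG x) (fun x _ => hE x)
  simp_rw [e] at this
  rw [integral_const_mul] at this
  unfold pd
  linarith

/-- Second Gaussian moments. -/
theorem wick2 (N : ℕ) (hN : 0 < N) (a b : Fin N) :
    ∫ y : EuclideanSpace ℝ (Fin N), y a * y b * Real.exp (-‖y‖ ^ 2)
      = 1 / 2 * (if b = a then 1 else 0) * ∫ y : EuclideanSpace ℝ (Fin N), Real.exp (-‖y‖ ^ 2) := by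
  have e : pd N a (fun y => y b) = fun _ => if b = a then 1 else 0 := funext fun y => pd_coord N a b y
  rw [stein N hN 1 0 a (fun y => y b) (by fun_prop) (by rw [e]; fun_prop) 1 1
    (fun y => by simpa using coord_le N y b) (fun y => by rw [e]; split_ifs <;> simp), e,
    integral_const_mul]
  ring

theorem gauss_int2 (N : ℕ) (hN : 0 < N) (a b : Fin N) :
    Integrable (fun y : EuclideanSpace ℝ (Fin N) => y a * y b * Real.exp (-‖y‖ ^ 2)) := by
  refine gauss_int N hN 2 (fun y => y a * y b) (by fun_prop) 1 fun y => ?_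
  rw [abs_mul]
  nlinarith [coord_le N y a, coord_le N y b, abs_nonneg (y a), abs_nonneg (y b)]

theorem gauss_int4 (N : ℕ) (hN : 0 < N) (a b c d : Fin N) :
    Integrable (fun y : EuclideanSpace ℝ (Fin N) =>
      y a * (y b * (y c * y d)) * Real.exp (-‖y‖ ^ 2)) := by
  refine gauss_int N hN 4 (fun y => y a * (y b * (y c * y d))) (by fun_prop) 1 fun y => ?_
  simp only [abs_mul]
  calc |y a| * (|y b| * (|y c| * |y d|)) ≤ ‖y‖ * (‖y‖ * (‖y‖ * ‖y‖)) := by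
        gcongr <;> exact coord_le N y _
    _ = 1 * ‖y‖ ^ 4 := by ring

/-- Fourth Gaussian moments. -/
theorem wick4 (N : ℕ) (hN : 0 < N) (a b c d : Fin N) :
    ∫ y : EuclideanSpace ℝ (Fin N), y a * (y b * (y c * y d)) * Real.exp (-‖y‖ ^ 2)
      = 1 / 4 * ((if b = a then 1 else 0) * (if d = c then 1 else 0)
        + (if c = a then 1 else 0) * (if d = b then 1 else 0)
        + (if d = a then 1 else 0) * (if c = b then 1 else 0))
        * ∫ y : EuclideanSpace ℝ (Fin N), Real.exp (-‖y‖ ^ 2) := by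
  have e : pd N a (fun y => y b * (y c * y d)) = fun y =>
      (if d = a then 1 else 0) * (y b * y c) + (if c = a then 1 else 0) * (y b * y d)
        + (if b = a then 1 else 0) * (y c * y d) := by
    funext y
    rw [pd_mul' N a _ _ (by fun_prop) (by fun_prop), pd_mul' N a _ _ (by fun_prop) (by fun_prop),
      pd_coord, pd_coord, pd_coord]
    ring
  have hi : ∀ i j : Fin N, |if i = j then (1 : ℝ) else 0| ≤ 1 := fun i j => by
    split_ifs <;> simp
  have h2 : ∀ (y : EuclideanSpace ℝ (Fin N)) (p q i j : Fin N),
      |(if p = q then (1 : ℝ) else 0) * (y i * y j)| ≤ ‖y‖ ^ 2 := fun y p q i j => by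
    simp only [abs_mul]
    calc _ ≤ 1 * (‖y‖ * ‖y‖) := by
          gcongr
          · exact hi _ _
          · exact coord_le N y _
          · exact coord_le N y _
      _ = ‖y‖ ^ 2 := by ring
  rw [stein N hN 3 2 a (fun y => y b * (y c * y d)) (by fun_prop) (by rw [e]; fun_prop) 1 3
    (fun y => by
      simp only [abs_mul]
      calc |y b| * (|y c| * |y d|) ≤ ‖y‖ * (‖y‖ * ‖y‖) := by
            gcongr <;> exact coord_le N y _
        _ = 1 * ‖y‖ ^ 3 := by ring)
    (fun y => by
      rw [e]
      refine (abs_add_three _ _ _).trans ?_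
      linarith [h2 y d a b c, h2 y c a b d, h2 y b a c d]), e]
  simp only [add_mul, mul_assoc (ite _ _ _)]
  rw [integral_add, integral_add, integral_const_mul, integral_const_mul, integral_const_mul,
    wick2 N hN, wick2 N hN, wick2 N hN]
  · ring
  · exact (gauss_int2 N hN _ _).const_mul _
  · exact (gauss_int2 N hN _ _).const_mul _
  · exact ((gauss_int2 N hN _ _).const_mul _).add ((gauss_int2 N hN _ _).const_mul _)
  · exact (gauss_int2 N hN _ _).const_mul _

/-- The quadratic form with coefficients `A`. -/
def qf (N : ℕ) (A : Fin N → Fin N → ℝ) (y : EuclideanSpace ℝ (Fin N)) : ℝ :=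
  ∑ p : Fin N, ∑ q : Fin N, A p q * y p * y q

theorem gauss_qf (N : ℕ) (hN : 0 < N) (A : Fin N → Fin N → ℝ) :
    ∫ y, qf N A y ^ 2 * Real.exp (-‖y‖ ^ 2)
      = 1 / 4 * ((∑ p, A p p) ^ 2 + ∑ p, ∑ q, A p q ^ 2 + ∑ p, ∑ q, A p q * A q p)
        * ∫ y : EuclideanSpace ℝ (Fin N), Real.exp (-‖y‖ ^ 2) := by
  have e : ∀ y, qf N A y ^ 2 * Real.exp (-‖y‖ ^ 2) = ∑ p, ∑ q, ∑ a, ∑ b,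
      (A p q * A a b) * (y p * (y q * (y a * y b)) * Real.exp (-‖y‖ ^ 2)) := by
    intro y
    unfold qf
    simp only [sq (∑ p : Fin N, _), Finset.sum_mul, Finset.mul_sum]
    refine Finset.sum_congr rfl fun p _ => Finset.sum_congr rfl fun q _ =>
      Finset.sum_congr rfl fun a _ => Finset.sum_congr rfl fun b _ => ?_
    ring
  simp_rw [e]
  have hi : ∀ p q a b, Integrable (fun y : EuclideanSpace ℝ (Fin N) =>
      (A p q * A a b) * (y p * (y q * (y a * y b)) * Real.exp (-‖y‖ ^ 2))) :=
    fun p q a b => (gauss_int4 N hN p q a b).const_mul _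
  rw [integral_finsetSum _ fun p _ => integrable_finsetSum _ fun q _ =>
    integrable_finsetSum _ fun a _ => integrable_finsetSum _ fun b _ => hi p q a b]
  simp_rw [integral_finsetSum Finset.univ fun (q : Fin N) _ =>
    integrable_finsetSum Finset.univ fun (a : Fin N) _ => integrable_finsetSum Finset.univ fun (b : Fin N) _ => hi _ q a b]
  simp_rw [integral_finsetSum Finset.univ fun (a : Fin N) _ =>
    integrable_finsetSum Finset.univ fun (b : Fin N) _ => hi _ _ a b]
  simp_rw [integral_finsetSum Finset.univ fun (b : Fin N) _ => hi _ _ _ b]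
  simp_rw [integral_const_mul, wick4 N hN]
  set Z := ∫ y : EuclideanSpace ℝ (Fin N), Real.exp (-‖y‖ ^ 2)
  have e1 : ∑ p, ∑ q, ∑ a, ∑ b, (A p q * A a b) *
      ((if q = p then (1 : ℝ) else 0) * (if b = a then 1 else 0)) = (∑ p, A p p) ^ 2 := by
    simp [sq, Finset.sum_mul_sum]
  have e2 : ∑ p, ∑ q, ∑ a, ∑ b, (A p q * A a b) *
      ((if a = p then (1 : ℝ) else 0) * (if b = q then 1 else 0)) = ∑ p, ∑ q, A p q ^ 2 := by
    simp [sq]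
  have e3 : ∑ p, ∑ q, ∑ a, ∑ b, (A p q * A a b) *
      ((if b = p then (1 : ℝ) else 0) * (if a = q then 1 else 0)) = ∑ p, ∑ q, A p q * A q p := by
    simp
  rw [← e1, ← e2, ← e3]
  simp only [← Finset.sum_add_distrib, Finset.mul_sum, Finset.sum_mul]
  refine Finset.sum_congr rfl fun p _ => Finset.sum_congr rfl fun q _ =>
      Finset.sum_congr rfl fun a _ => Finset.sum_congr rfl fun b _ => ?_
  ring

theorem qf_hom (N : ℕ) (A : Fin N → Fin N → ℝ) (r : ℝ) (y : EuclideanSpace ℝ (Fin N)) :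
    qf N A (r • y) ^ 2 = r ^ 4 * qf N A y ^ 2 := by
  have : qf N A (r • y) = r ^ 2 * qf N A y := by
    unfold qf
    simp only [Finset.mul_sum]
    refine Finset.sum_congr rfl fun p _ => Finset.sum_congr rfl fun q _ => ?_
    simp only [PiLp.smul_apply, smul_eq_mul]
    ring
  rw [this]; ring

theorem qf_delta (N : ℕ) (y : EuclideanSpace ℝ (Fin N)) :
    qf N (fun p q => if p = q then 1 else 0) y = ‖y‖ ^ 2 := by
  rw [EuclideanSpace.norm_sq_eq]
  simp [qf, sq]

theorem sphere_qf (N : ℕ) (hN : 0 < N) (A : Fin N → Fin N → ℝ) :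
    ∫ θ, qf N A θ.1 ^ 2 ∂(sphereMeasure N) = sphereArea N * (1 / (N * ((N : ℝ) + 2))) *
      ((∑ p, A p p) ^ 2 + ∑ p, ∑ q, A p q ^ 2 + ∑ p, ∑ q, A p q * A q p) := by
  have hZ : 0 < ∫ y : EuclideanSpace ℝ (Fin N), Real.exp (-‖y‖ ^ 2) := by
    apply integral_exp_pos
    simpa using gauss_int N hN 0 (fun _ => 1) (by fun_prop) 1 (by simp)
  have h1 := polar4 N hN (fun y => qf N A y ^ 2) (qf_hom N A) (fun r => Real.exp (-r ^ 2))
  have h2 := polar4 N hN (fun y => qf N (fun p q => if p = q then 1 else 0) y ^ 2) (qf_hom N _)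
    (fun r => Real.exp (-r ^ 2))
  simp only [gauss_qf N hN] at h1 h2
  have h3 : ∫ θ, qf N (fun p q => if p = q then 1 else 0) θ.1 ^ 2 ∂(sphereMeasure N)
      = sphereArea N := by
    simp [qf_delta, sphereArea, Measure.real]
  rw [h3] at h2
  have hN' : (0 : ℝ) < N := by exact_mod_cast hN
  simp at h2
  set Z := ∫ y : EuclideanSpace ℝ (Fin N), Real.exp (-‖y‖ ^ 2)
  set I := ∫ r in Set.Ioi (0 : ℝ), r ^ (N + 3) * Real.exp (-r ^ 2)
  set T := (∑ p, A p p) ^ 2 + ∑ p, ∑ q, A p q ^ 2 + ∑ p, ∑ q, A p q * A q p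
  set X := ∫ θ, qf N A θ.1 ^ 2 ∂(sphereMeasure N)
  have hI : I ≠ 0 := by
    intro h0
    rw [h0] at h2
    have : 0 < 4⁻¹ * ((N:ℝ) ^ 2 + N + N) * Z := by positivity
    linarith
  have h4 : X * I = sphereArea N * (1 / (N * ((N : ℝ) + 2))) * T * I := by
    rw [← h1]
    have : sphereArea N * (1 / (N * ((N : ℝ) + 2))) * T * I =
      (sphereArea N * I) * (1 / (N * ((N : ℝ) + 2))) * T := by ring
    rw [this, ← h2]
    field_simp
    ring
  exact mul_right_cancel₀ hI h4

theorem qf_diff (N : ℕ) (A : Fin N → Fin N → ℝ) : Differentiable ℝ (qf N A) := by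
  unfold qf; fun_prop

/-- The linear form which is the `m`-th partial derivative of `qf N A`. -/
def lf (N : ℕ) (A : Fin N → Fin N → ℝ) (m : Fin N) (y : EuclideanSpace ℝ (Fin N)) : ℝ :=
  ∑ q : Fin N, (A m q + A q m) * y q

theorem lf_diff (N : ℕ) (A : Fin N → Fin N → ℝ) (m : Fin N) : Differentiable ℝ (lf N A m) := by
  unfold lf; fun_prop

theorem pd_lf (N : ℕ) (A : Fin N → Fin N → ℝ) (m : Fin N) (y : EuclideanSpace ℝ (Fin N)) :
    pd N m (lf N A m) y = 2 * A m m := by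
  unfold lf
  rw [pd_sum' N m _ (by fun_prop)]
  have e : ∀ q, pd N m (fun y => (A m q + A q m) * y q) y =
      (A m q + A q m) * (if q = m then 1 else 0) := by
    intro q
    rw [pd_mul' N m _ _ (by fun_prop) (by fun_prop), pd_const', pd_coord]
    ring
  simp_rw [e]
  simp
  ring

theorem pd_qf (N : ℕ) (A : Fin N → Fin N → ℝ) (m : Fin N) (y : EuclideanSpace ℝ (Fin N)) :
    pd N m (qf N A) y = lf N A m y := by
  have e : ∀ p q, pd N m (fun y => A p q * y p * y q) y =
      (A p q * y p) * (if q = m then 1 else 0) + (A p q * y q) * (if p = m then 1 else 0) := by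
    intro p q
    rw [pd_mul' N m _ _ (by fun_prop) (by fun_prop), pd_mul' N m _ _ (by fun_prop) (by fun_prop),
      pd_coord, pd_coord, pd_const']
    ring
  unfold qf lf
  rw [pd_sum' N m _ (by fun_prop)]
  have e' : ∀ p, pd N m (fun y => ∑ q, A p q * y p * y q) y =
      ∑ q, pd N m (fun y => A p q * y p * y q) y := fun p =>
    pd_sum' N m (fun q y => A p q * y p * y q) (by fun_prop) y
  simp_rw [e', e]
  simp [Finset.sum_add_distrib, add_mul]
  ring

theorem euler (N : ℕ) (A : Fin N → Fin N → ℝ) (y : EuclideanSpace ℝ (Fin N)) :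
    ∑ m, y m * lf N A m y = 2 * qf N A y := by
  have h : qf N A y = ∑ p : Fin N, ∑ q : Fin N, A q p * y p * y q := by
    unfold qf
    rw [Finset.sum_comm]
    refine Finset.sum_congr rfl fun p _ => Finset.sum_congr rfl fun q _ => ?_
    ring
  have : 2 * qf N A y = qf N A y + ∑ p : Fin N, ∑ q : Fin N, A q p * y p * y q := by
    rw [← h]; ring
  rw [this]
  unfold qf lf
  simp only [Finset.mul_sum, ← Finset.sum_add_distrib]
  refine Finset.sum_congr rfl fun p _ => Finset.sum_congr rfl fun q _ => ?_
  ring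

theorem lap (N : ℕ) (A : Fin N → Fin N → ℝ) (hA : ∑ p, A p p = 0) (f : ℝ → ℝ)
    (hf : Differentiable ℝ f) (hf' : Differentiable ℝ (deriv f)) (y : EuclideanSpace ℝ (Fin N)) :
    ∑ m, pd N m (pd N m (fun y => f (‖y‖ ^ 2) * qf N A y)) y =
      (2 * ((N : ℝ) + 4) * deriv f (‖y‖ ^ 2) + 4 * ‖y‖ ^ 2 * deriv (deriv f) (‖y‖ ^ 2))
        * qf N A y := by
  have e1 : ∀ m, pd N m (fun y => f (‖y‖ ^ 2) * qf N A y) = fun y =>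
      f (‖y‖ ^ 2) * lf N A m y + qf N A y * (2 * y m * deriv f (‖y‖ ^ 2)) := by
    intro m
    funext y
    rw [pd_mul' N m _ _ (radial_diff N f hf) (qf_diff N A), pd_qf, pd_radial N m f hf]
  have hr := radial_diff N f hf
  have hr' := radial_diff N (deriv f) hf'
  have hq := qf_diff N A
  have e2 : ∀ m, pd N m (pd N m (fun y => f (‖y‖ ^ 2) * qf N A y)) y =
      (f (‖y‖ ^ 2) * 2) * A m m + (4 * deriv f (‖y‖ ^ 2)) * (y m * lf N A m y)
      + 2 * deriv f (‖y‖ ^ 2) * qf N A y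
      + (4 * deriv (deriv f) (‖y‖ ^ 2) * qf N A y) * (y m) ^ 2 := by
    intro m
    have hl := lf_diff N A m
    have h1 : Differentiable ℝ (fun y => f (‖y‖ ^ 2) * lf N A m y) := hr.mul hl
    have h0 : Differentiable ℝ (fun y : EuclideanSpace ℝ (Fin N) => 2 * y m) := by fun_prop
    have h2 : Differentiable ℝ (fun y : EuclideanSpace ℝ (Fin N) =>
      2 * y m * deriv f (‖y‖ ^ 2)) := h0.mul hr'
    have h3 : Differentiable ℝ (fun y => qf N A y * (2 * y m * deriv f (‖y‖ ^ 2))) := hq.mul h2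
    rw [e1, pd_add' N m _ _ h1 h3,
      pd_mul' N m _ _ hr hl,
      pd_mul' N m _ _ hq h2, pd_mul' N m _ _ (by fun_prop) hr',
      pd_mul' N m _ _ (by fun_prop) (by fun_prop), pd_const', pd_coord, pd_lf, pd_qf,
      pd_radial N m f hf, pd_radial N m (deriv f) hf']
    simp
    ring
  have hn : ∑ m, (y m) ^ 2 = ‖y‖ ^ 2 := by
    rw [EuclideanSpace.norm_sq_eq]; simp
  simp_rw [e2, Finset.sum_add_distrib, ← Finset.mul_sum]
  rw [hA, euler, hn]
  simp
  ring

theorem stmt_19 (N : ℕ) (hN : 25 ≤ N)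
    (W : Fin N → Fin N → Fin N → Fin N → ℝ)
    (hW1 : ∀ i p j q, W i p j q = - W p i j q)
    (hW2 : ∀ i p j q, W i p j q = - W i p q j)
    (hW3 : ∀ i p j q, W i p j q = W j q i p)
    (hBianchi : ∀ i p j q, W i p j q + W i j q p + W i q p j = 0)
    (hTrace : ∀ p q, ∑ i : Fin N, W i p i q = 0)
    (f : ℝ → ℝ)
    (hf : ∃ P : Polynomial ℝ, P.degree ≤ 4 ∧ ∀ x, f x = P.eval x)
    (lam' : ℝ) (hlam' : 0 < lam')
    (u : EuclideanSpace ℝ (Fin N) → ℝ)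
    (hu : ∀ y, u y = (lam' / (lam' ^ 2 + ‖y‖ ^ 2)) ^ (((N : ℝ) - 4) / 2)) :
    (∫ y : EuclideanSpace ℝ (Fin N),
        ∑ i : Fin N, ∑ j : Fin N, ∑ m : Fin N, ∑ s : Fin N,
          pd N m (pd N m (Hbar N W f i j)) y * pd N s (pd N s (Hbar N W f i j)) y
            * u y ^ 2)
      = sphereArea N
          * (∑ i : Fin N, ∑ j : Fin N, ∑ k : Fin N, ∑ l : Fin N,
              (W i k j l + W i l j k) ^ 2)
          * lam' ^ (N - 4)
          * (1 / (2 * N * ((N : ℝ) + 2)))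
          * ∫ r in Set.Ioi (0 : ℝ),
              (2 * ((N : ℝ) + 4) * deriv f (r ^ 2)
                  + 4 * r ^ 2 * deriv (deriv f) (r ^ 2)) ^ 2
                * r ^ (N + 3) / (lam' ^ 2 + r ^ 2) ^ (N - 4) := by
  obtain ⟨P, -, hP⟩ := hf
  have hfP : f = fun x => P.eval x := funext hP
  have hd : deriv f = fun x => P.derivative.eval x := by
    rw [hfP]; funext x; exact P.deriv
  have hf1 : Differentiable ℝ f := by rw [hfP]; exact P.differentiable
  have hf2 : Differentiable ℝ (deriv f) := by rw [hd]; exact P.derivative.differentiable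
  have hN0 : 0 < N := by omega
  have htr : ∀ i j, ∑ p, W i p j p = 0 := by
    intro i j
    rw [← hTrace i j]
    refine Finset.sum_congr rfl fun p _ => ?_
    rw [hW1, hW2, neg_neg]
  set c : ℝ → ℝ := fun r => 2 * ((N : ℝ) + 4) * deriv f (r ^ 2)
    + 4 * r ^ 2 * deriv (deriv f) (r ^ 2) with hc
  have hu2 : ∀ y, u y ^ 2 = lam' ^ (N - 4) / (lam' ^ 2 + ‖y‖ ^ 2) ^ (N - 4) := by
    intro y
    have hpos : 0 < lam' ^ 2 + ‖y‖ ^ 2 := by positivity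
    have hcast : ((N - 4 : ℕ) : ℝ) = (N : ℝ) - 4 := by
      rw [Nat.cast_sub (by omega)]; norm_num
    rw [hu, ← Real.rpow_natCast, ← Real.rpow_mul (by positivity)]
    have : ((N : ℝ) - 4) / 2 * ((2 : ℕ) : ℝ) = ((N - 4 : ℕ) : ℝ) := by
      rw [hcast]; push_cast; ring
    rw [this, Real.rpow_natCast, div_pow]
  have hint : ∀ y : EuclideanSpace ℝ (Fin N),
      (∑ i : Fin N, ∑ j : Fin N, ∑ m : Fin N, ∑ s : Fin N,
          pd N m (pd N m (Hbar N W f i j)) y * pd N s (pd N s (Hbar N W f i j)) y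
            * u y ^ 2)
      = (∑ i, ∑ j, qf N (fun p q => W i p j q) y ^ 2) *
        (lam' ^ (N - 4) * (c ‖y‖ ^ 2 / (lam' ^ 2 + ‖y‖ ^ 2) ^ (N - 4))) := by
    intro y
    have hl : ∀ i j, ∑ m, pd N m (pd N m (Hbar N W f i j)) y
        = c ‖y‖ * qf N (fun p q => W i p j q) y := fun i j =>
      lap N (fun p q => W i p j q) (htr i j) f hf1 hf2 y
    have hs : ∀ i j, ∑ m : Fin N, ∑ s : Fin N,
          pd N m (pd N m (Hbar N W f i j)) y * pd N s (pd N s (Hbar N W f i j)) y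
            * u y ^ 2 = (c ‖y‖ * qf N (fun p q => W i p j q) y) ^ 2 * u y ^ 2 := by
      intro i j
      rw [← hl i j, sq (∑ m, _), Finset.sum_mul_sum]
      simp only [Finset.sum_mul]
    simp_rw [hs, hu2, Finset.sum_mul]
    refine Finset.sum_congr rfl fun i _ => Finset.sum_congr rfl fun j _ => ?_
    ring
  simp_rw [hint]
  rw [polar4 N hN0 (fun y => ∑ i, ∑ j, qf N (fun p q => W i p j q) y ^ 2)
    (by intro r y; simp only [qf_hom, Finset.mul_sum])
    (fun r => lam' ^ (N - 4) * (c r ^ 2 / (lam' ^ 2 + r ^ 2) ^ (N - 4)))]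
  have hr : ∫ r in Set.Ioi (0 : ℝ), r ^ (N + 3) *
      (lam' ^ (N - 4) * (c r ^ 2 / (lam' ^ 2 + r ^ 2) ^ (N - 4))) = lam' ^ (N - 4) *
      ∫ r in Set.Ioi (0 : ℝ), c r ^ 2 * r ^ (N + 3) / (lam' ^ 2 + r ^ 2) ^ (N - 4) := by
    rw [← integral_const_mul]
    congr 1
    funext r
    ring
  have : IsFiniteMeasure (sphereMeasure N) := by unfold sphereMeasure; infer_instance
  have hqi : ∀ i j, Integrable (fun θ : Metric.sphere (0 : EuclideanSpace ℝ (Fin N)) 1 =>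
      qf N (fun p q => W i p j q) θ.1 ^ 2) (sphereMeasure N) := by
    intro i j
    have hcont : Continuous (fun θ : Metric.sphere (0 : EuclideanSpace ℝ (Fin N)) 1 =>
      qf N (fun p q => W i p j q) θ.1 ^ 2) :=
      ((qf_diff N _).continuous.comp continuous_subtype_val).pow 2
    exact hcont.integrable_of_hasCompactSupport (HasCompactSupport.of_compactSpace _)
  have hsph : ∫ θ, (∑ i, ∑ j, qf N (fun p q => W i p j q) θ.1 ^ 2) ∂(sphereMeasure N)
      = sphereArea N * (1 / (2 * N * ((N : ℝ) + 2))) *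
        ∑ i : Fin N, ∑ j : Fin N, ∑ k : Fin N, ∑ l : Fin N, (W i k j l + W i l j k) ^ 2 := by
    rw [integral_finsetSum _ fun i _ => integrable_finsetSum _ fun j _ => hqi i j]
    simp_rw [integral_finsetSum Finset.univ fun (j : Fin N) _ => hqi _ j, sphere_qf N hN0, htr]
    rw [Finset.mul_sum]
    refine Finset.sum_congr rfl fun i _ => ?_
    rw [Finset.mul_sum]
    refine Finset.sum_congr rfl fun j _ => ?_
    have e1 : ∑ k : Fin N, ∑ l : Fin N, (W i k j l + W i l j k) ^ 2 =
        ∑ k, ∑ l, W i k j l ^ 2 + ∑ k, ∑ l, W i l j k ^ 2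
          + 2 * ∑ k, ∑ l, W i k j l * W i l j k := by
      simp only [Finset.mul_sum, ← Finset.sum_add_distrib]
      refine Finset.sum_congr rfl fun k _ => Finset.sum_congr rfl fun l _ => ?_
      ring
    have e2 : ∑ k, ∑ l, W i l j k ^ 2 = ∑ k, ∑ l, W i k j l ^ 2 := Finset.sum_comm
    rw [e1, e2]
    have hN' : (0 : ℝ) < N := by exact_mod_cast hN0
    field_simp
    ring
  rw [hr, hsph]
  ring
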